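/- In the K3 lattice L_{K3} = E8 ⊕ E8 ⊕ U ⊕ U ⊕ U of rank 22, there exists a primitive sublattice M (a ℤ-submodule with torsion-free quotient L_{K3}/M) of rank 11 such that M with the restricted form is isometric to U ⊕ D9, and the orthogonal complement M^⊥ = {x ∈ L_{K3} : x·m = 0 for all m ∈ M} with the restricted form is isometric to ⟨4⟩ ⊕ U ⊕ E8. -/

import Mathlib

open Matrix

/-- The hyperbolic plane `U`, with Gram matrix `[[0,1],[1,0]]`. -/
abbrev latU : Matrix (Fin 2) (Fin 2) ℤ := !![0, 1; 1, 0]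

/-- The negative definite even unimodular lattice `E₈` (negative of the Cartan matrix). -/
abbrev latE8 : Matrix (Fin 8) (Fin 8) ℤ :=
  !![-2,  0,  1,  0,  0,  0,  0,  0;
      0, -2,  0,  1,  0,  0,  0,  0;
      1,  0, -2,  1,  0,  0,  0,  0;
      0,  1,  1, -2,  1,  0,  0,  0;
      0,  0,  0,  1, -2,  1,  0,  0;
      0,  0,  0,  0,  1, -2,  1,  0;
      0,  0,  0,  0,  0,  1, -2,  1;
      0,  0,  0,  0,  0,  0,  1, -2]

/-- Orthogonal direct sum of two lattices (block-diagonal Gram matrix). -/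
def dsum {a b : ℕ} (A : Matrix (Fin a) (Fin a) ℤ) (B : Matrix (Fin b) (Fin b) ℤ) :
    Matrix (Fin (a + b)) (Fin (a + b)) ℤ :=
  Matrix.reindex finSumFinEquiv finSumFinEquiv (Matrix.fromBlocks A 0 0 B)

/-- The bilinear form of the lattice with Gram matrix `G` : `x ⋅ y = xᵀ G y`. -/
def bform {n : ℕ} (G : Matrix (Fin n) (Fin n) ℤ) (x y : Fin n → ℤ) : ℤ :=
  x ⬝ᵥ G.mulVec y


/-- The negative definite lattice `D₉` (negative of the Cartan matrix of `D₉`). -/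
abbrev latD9 : Matrix (Fin 9) (Fin 9) ℤ :=
  !![-2,  1,  0,  0,  0,  0,  0,  0,  0;
      1, -2,  1,  0,  0,  0,  0,  0,  0;
      0,  1, -2,  1,  0,  0,  0,  0,  0;
      0,  0,  1, -2,  1,  0,  0,  0,  0;
      0,  0,  0,  1, -2,  1,  0,  0,  0;
      0,  0,  0,  0,  1, -2,  1,  0,  0;
      0,  0,  0,  0,  0,  1, -2,  1,  1;
      0,  0,  0,  0,  0,  0,  1, -2,  0;
      0,  0,  0,  0,  0,  0,  1,  0, -2]

/-- The K3 lattice `L_{K3} = E8 ⊕ E8 ⊕ U ⊕ U ⊕ U` of rank 22. -/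
def gramK3 : Matrix (Fin 22) (Fin 22) ℤ :=
  dsum latE8 (dsum latE8 (dsum latU (dsum latU latU)))

/-- `M = U ⊕ D9`. -/
def gramM : Matrix (Fin 11) (Fin 11) ℤ := dsum latU latD9

/-- `N = ⟨4⟩ ⊕ U ⊕ E8`. -/
def gramN : Matrix (Fin 11) (Fin 11) ℤ := dsum (dsum !![(4 : ℤ)] latU) latE8

/- The ten simple roots of `E₁₀ = E₈ ⊕ U`, with Dynkin diagram `T(2,3,7)`, form a basis of this
unimodular lattice. Deleting the end node of the arm of length two leaves the diagram `D₉`, so the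
other nine roots span a primitive `D₉`, and its orthogonal complement is generated by the
fundamental weight of the deleted root, which has norm `4`. In the K3 lattice `E₁₀ ⊕ U ⊕ U ⊕ E₈`,
let `M` absorb one summand `U` and its complement the remaining `U ⊕ E₈`. In terms of a pair of dual
bases, part of the first basis spans `M` and the complementary part of the second spans `M^⊥`. -/

section DualBases

open Module Submodule

variable {R V ι : Type*} [CommRing R] [AddCommGroup V] [Module R V]

theorem dualBases_of_apply_eq_ite [Fintype ι] [DecidableEq ι] [Module.Finite R V] [Free R V]
    {e : ι → V} {ε : ι → Dual R V} (h : ∀ i j, ε i (e j) = if i = j then 1 else 0)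
    (hcard : finrank R V ≤ Fintype.card ι) : DualBases e ε where
  eval_same i := by simp [h]
  eval_of_ne i j hij := by simp [h, hij]
  total {x y} hxy := by
    cases subsingleton_or_nontrivial R
    · exact (Module.subsingleton R V).elim x y
    have hsurj : Function.Surjective (LinearMap.pi ε) := fun c =>
      ⟨∑ j, c j • e j, by ext i; simp [h]⟩
    have hbij := OrzechProperty.bijective_of_surjective_of_finrank_le _ hsurj (by simpa using hcard)
    exact hbij.injective (funext hxy)

theorem linearIndependent_of_dualBases {e : ι → V} {ε : ι → Dual R V} (h : DualBases e ε) :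
    LinearIndependent R e :=
  h.coe_basis ▸ h.basis.linearIndependent

theorem mem_span_image_iff_dual_eq_zero {e : ι → V} {ε : ι → Dual R V} (h : DualBases e ε)
    {s : Set ι} {x : V} : x ∈ span R (e '' s) ↔ ∀ i ∉ s, ε i x = 0 := by
  rw [← h.coe_basis, h.basis.mem_span_image]
  simp only [h.basis_repr_apply, Set.subset_def, Finset.mem_coe, Finsupp.mem_support_iff,
    h.coeffs_apply]
  exact forall_congr' fun i => not_imp_comm

theorem mem_span_image_of_smul_mem [NoZeroDivisors R] {e : ι → V} {ε : ι → Dual R V}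
    (h : DualBases e ε) {s : Set ι} {c : R} (hc : c ≠ 0) {x : V}
    (hx : c • x ∈ span R (e '' s)) : x ∈ span R (e '' s) := by
  rw [mem_span_image_iff_dual_eq_zero h] at hx ⊢
  intro i hi
  have hcx : c * ε i x = 0 := by simpa using hx i hi
  exact (mul_eq_zero.mp hcx).resolve_left hc

theorem orthogonal_span_image_eq_span_image_compl {β : LinearMap.BilinForm R V} {b d : ι → V}
    (h : DualBases d fun i => β (b i)) (s : Set ι) :
    β.orthogonal (span R (b '' s)) = span R (d '' sᶜ) := by
  ext x
  have hspan : x ∈ β.orthogonal (span R (b '' s)) ↔ span R (b '' s) ≤ LinearMap.ker (β.flip x) :=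
    Iff.rfl
  rw [hspan, span_le, mem_span_image_iff_dual_eq_zero h]
  simp [Set.subset_def]

theorem exists_equiv_span_range_dotProduct_eq [Fintype ι] (β : LinearMap.BilinForm R V)
    {v : ι → V} (hv : LinearIndependent R v) :
    ∃ e : span R (Set.range v) ≃ₗ[R] (ι → R), ∀ x y : span R (Set.range v),
      e x ⬝ᵥ (Matrix.of fun i j => β (v i) (v j)) *ᵥ e y = β x y := by
  classical
  let w := Basis.span hv
  have hgram : LinearMap.BilinForm.toMatrix w (β.restrict _) =
      Matrix.of fun i j => β (v i) (v j) := by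
    ext i j
    simp [w, LinearMap.BilinForm.toMatrix_apply, Basis.span_apply]
  refine ⟨w.equivFun, fun x y => ?_⟩
  rw [← hgram]
  exact ((β.restrict _).apply_eq_dotProduct_toMatrix_mulVec w x y).symm

end DualBases

section GramMatrix

open Module Submodule Sum

theorem bform_eq_toBilin' {n : ℕ} (G : Matrix (Fin n) (Fin n) ℤ) (x y : Fin n → ℤ) :
    bform G x y = Matrix.toBilin' G x y :=
  (Matrix.toBilin'_apply' G x y).symm

/-- The Gram matrix of the family `v` in the lattice with Gram matrix `G`. -/
def gramMatrix {n m : ℕ} (G : Matrix (Fin n) (Fin n) ℤ) (v : Fin m → Fin n → ℤ) :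
    Matrix (Fin m) (Fin m) ℤ :=
  Matrix.of fun i j => bform G (v i) (v j)

variable {n m k : ℕ} {G : Matrix (Fin n) (Fin n) ℤ}

theorem bform_comm (hG : G.IsSymm) (x y : Fin n → ℤ) : bform G x y = bform G y x := by
  rw [bform, bform, Matrix.dotProduct_mulVec, ← Matrix.mulVec_transpose, hG, dotProduct_comm]

theorem exists_equiv_span_range_bform_eq {v : Fin m → Fin n → ℤ} (hv : LinearIndependent ℤ v) :
    ∃ e : span ℤ (Set.range v) ≃ₗ[ℤ] (Fin m → ℤ), ∀ x y : span ℤ (Set.range v),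
      bform (gramMatrix G v) (e x) (e y) = bform G x y := by
  obtain ⟨e, he⟩ := exists_equiv_span_range_dotProduct_eq (Matrix.toBilin' G) hv
  refine ⟨e, fun x y => ?_⟩
  have hgram : gramMatrix G v = Matrix.of fun i j => Matrix.toBilin' G (v i) (v j) := by
    simp only [gramMatrix, bform_eq_toBilin']
  rw [hgram, bform, he, bform_eq_toBilin']

theorem exists_primitive_sublattice_of_dual_families {H : Matrix (Fin m) (Fin m) ℤ}
    {K : Matrix (Fin k) (Fin k) ℤ} {b d : Fin m ⊕ Fin k → Fin n → ℤ} (hG : G.IsSymm)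
    (hn : n ≤ m + k) (hbd : ∀ i j, bform G (b i) (d j) = if i = j then 1 else 0)
    (hH : gramMatrix G (b ∘ inl) = H) (hK : gramMatrix G (d ∘ inr) = K) :
    ∃ M : Submodule ℤ (Fin n → ℤ),
      (∀ c : ℤ, c ≠ 0 → ∀ x, c • x ∈ M → x ∈ M) ∧
      (∃ e : M ≃ₗ[ℤ] (Fin m → ℤ), ∀ x y : M, bform H (e x) (e y) = bform G x y) ∧
      ∃ W : Submodule ℤ (Fin n → ℤ),
        (∀ x, x ∈ W ↔ ∀ y ∈ M, bform G x y = 0) ∧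
        ∃ f : W ≃ₗ[ℤ] (Fin k → ℤ), ∀ x y : W, bform K (f x) (f y) = bform G x y := by
  let β := Matrix.toBilin' G
  have hcard : finrank ℤ (Fin n → ℤ) ≤ Fintype.card (Fin m ⊕ Fin k) := by simpa using hn
  have hd : DualBases d fun i => β (b i) :=
    dualBases_of_apply_eq_ite (fun i j => by rw [← hbd, bform_eq_toBilin']) hcard
  have hb : DualBases b fun i => β.flip (d i) :=
    dualBases_of_apply_eq_ite
      (fun i j => by simp only [β, LinearMap.BilinForm.flip_apply, ← bform_eq_toBilin', hbd,
        @eq_comm _ j]) hcard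
  have hperp : span ℤ (Set.range (d ∘ inr)) = β.orthogonal (span ℤ (Set.range (b ∘ inl))) := by
    simp only [Set.range_comp, ← Set.compl_range_inl, orthogonal_span_image_eq_span_image_compl hd]
  refine ⟨span ℤ (Set.range (b ∘ inl)), fun c hc x hx => ?_,
    hH ▸ exists_equiv_span_range_bform_eq
      ((linearIndependent_of_dualBases hb).comp inl inl_injective),
    span ℤ (Set.range (d ∘ inr)), fun x => ?_,
    hK ▸ exists_equiv_span_range_bform_eq
      ((linearIndependent_of_dualBases hd).comp inr inr_injective)⟩
  · rw [Set.range_comp] at hx ⊢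
    exact mem_span_image_of_smul_mem hb hc hx
  · have hsymm (y : Fin n → ℤ) : β y x = bform G x y := by
      rw [← bform_eq_toBilin', bform_comm hG]
    simp only [hperp, LinearMap.BilinForm.mem_orthogonal_iff, hsymm]

end GramMatrix

/-- The vector of the K3 lattice with components `p`, `q` in the two copies of `E₈` and
`u`, `v`, `w` in the three copies of `U`. -/
def k3Vec (p q : Fin 8 → ℤ) (u v w : Fin 2 → ℤ) : Fin 22 → ℤ :=
  Fin.append p (Fin.append q (Fin.append u (Fin.append v w)))

/-- The fundamental weights of `E₈`: the rows form the basis dual to the simple roots, so the matrix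
is the inverse of `latE8`. The entries are negative because the form is negative definite, and the
last row is minus the highest root. -/
def e8Weight : Matrix (Fin 8) (Fin 8) ℤ :=
  !![ -4,  -5,  -7, -10,  -8,  -6,  -4,  -2;
      -5,  -8, -10, -15, -12,  -9,  -6,  -3;
      -7, -10, -14, -20, -16, -12,  -8,  -4;
     -10, -15, -20, -30, -24, -18, -12,  -6;
      -8, -12, -16, -24, -20, -15, -10,  -5;
      -6,  -9, -12, -18, -15, -12,  -8,  -4;
      -4,  -6,  -8, -12, -10,  -8,  -6,  -3;
      -2,  -3,  -4,  -6,  -5,  -4,  -3,  -2]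

/-- The simple roots of `E₁₀`, realized in the first `E₈` and the first `U` of the K3 lattice: those
of `E₈`, then the affine root `e - θ`, then `f - e`, where `θ` is the highest root of `E₈` and
`e`, `f` are the standard isotropic generators of `U`. The diagram is the chain `0, 2, 3, …, 9`
with the node `1` attached to `3`. -/
def e10Root : Fin 10 → Fin 22 → ℤ :=
  Fin.append (fun i : Fin 8 => k3Vec (Pi.single i 1) 0 0 0 0)
    ![k3Vec (e8Weight 7) 0 ![1, 0] 0 0, k3Vec 0 0 ![-1, 1] 0 0]

/-- The fundamental weights of `E₁₀`, dual to `e10Root`. The weight of a root of `E₈` is its weight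
in `E₈` corrected by the multiple of `e + f` that makes it orthogonal to the affine root. -/
def e10Weight : Fin 10 → Fin 22 → ℤ :=
  Fin.append (fun i : Fin 8 => k3Vec (e8Weight i) 0 (-e8Weight i 7 • ![1, 1]) 0 0)
    ![k3Vec 0 0 ![1, 1] 0 0, k3Vec 0 0 ![1, 0] 0 0]

/-- A basis of the K3 lattice whose first half is the standard basis of `U ⊕ D₉`: it consists of the
generators of the second `U` and of the roots of `E₁₀` other than the root `0`, the latter in the
order of the nodes of `D₉`. -/
def k3Basis : Fin 11 ⊕ Fin 11 → Fin 22 → ℤ := Sum.elim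
  ![k3Vec 0 0 0 ![1, 0] 0, k3Vec 0 0 0 ![0, 1] 0,
    e10Root 9, e10Root 8, e10Root 7, e10Root 6, e10Root 5, e10Root 4, e10Root 3,
    e10Root 1, e10Root 2]
  (Fin.append ![e10Root 0, k3Vec 0 0 0 0 ![0, 1], k3Vec 0 0 0 0 ![1, 0]]
    fun i : Fin 8 => k3Vec 0 (e8Weight i) 0 0 0)

/-- The basis of the K3 lattice dual to `k3Basis`. Its second half is the standard basis of
`⟨4⟩ ⊕ U ⊕ E₈`, the generator of `⟨4⟩` being the weight of the root `0` of `E₁₀`. -/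
def k3DualBasis : Fin 11 ⊕ Fin 11 → Fin 22 → ℤ := Sum.elim
  ![k3Vec 0 0 0 ![0, 1] 0, k3Vec 0 0 0 ![1, 0] 0,
    e10Weight 9, e10Weight 8, e10Weight 7, e10Weight 6, e10Weight 5, e10Weight 4, e10Weight 3,
    e10Weight 1, e10Weight 2]
  (Fin.append ![e10Weight 0, k3Vec 0 0 0 0 ![1, 0], k3Vec 0 0 0 0 ![0, 1]]
    fun i : Fin 8 => k3Vec 0 (Pi.single i 1) 0 0 0)

theorem gramK3_isSymm : gramK3.IsSymm := by
  rw [Matrix.IsSymm]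
  decide +kernel

theorem bform_k3Basis_k3DualBasis :
    ∀ i j, bform gramK3 (k3Basis i) (k3DualBasis j) = if i = j then 1 else 0 := by
  decide +kernel

theorem gramMatrix_k3Basis_inl : gramMatrix gramK3 (k3Basis ∘ Sum.inl) = gramM := by
  decide +kernel

theorem gramMatrix_k3DualBasis_inr : gramMatrix gramK3 (k3DualBasis ∘ Sum.inr) = gramN := by
  decide +kernel

/-- There is a primitive rank-11 sublattice `M` of the K3 lattice isometric to `U ⊕ D9`
whose orthogonal complement `M^⊥` is isometric to `⟨4⟩ ⊕ U ⊕ E8`. -/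
theorem exists_primitive_UD9_in_K3 :
    ∃ M : Submodule ℤ (Fin 22 → ℤ),
      (∀ c : ℤ, c ≠ 0 → ∀ x, c • x ∈ M → x ∈ M) ∧
      (∃ e : M ≃ₗ[ℤ] (Fin 11 → ℤ),
        ∀ x y : M, bform gramM (e x) (e y) = bform gramK3 x y) ∧
      ∃ W : Submodule ℤ (Fin 22 → ℤ),
        (∀ x, x ∈ W ↔ ∀ m ∈ M, bform gramK3 x m = 0) ∧
        ∃ f : W ≃ₗ[ℤ] (Fin 11 → ℤ),
          ∀ x y : W, bform gramN (f x) (f y) = bform gramK3 x y :=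
  exists_primitive_sublattice_of_dual_families gramK3_isSymm (by norm_num)
    bform_k3Basis_k3DualBasis gramMatrix_k3Basis_inl gramMatrix_k3DualBasis_inr
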